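/- Let q ≡ 1 (mod 4) be a prime power and let a ∈ F_q be such that a ≠ −1, 0, 1, the elements a, a+1, a³−a−1 are squares in F_q, and the elements a−1, a²+1, a²−a−1, a²+a+1, a²+a−1 are non-squares in F_q. Write L := L_{a,a²}. Then for every non-square η ∈ F_q, no triple of the form (0, η, z) is associative: for every z ∈ F_q, L(L(0,η), z) ≠ L(0, L(η,z)). -/

import Mathlib

open scoped Classical

/-!
Multiplication by a non-square `η` interchanges squares and non-squares, so it carries `L_{b,a}` to
`L_{a,b}`, and the triple `(0, η, η w)` is associative for `L_{a,a²}` iff `(0, 1, w)` is associative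
for `L_{a²,a}`. For the latter triple the associativity equation depends only on which of `w - 1`,
`w - a²` and `L_{a²,a}(1, w)` are squares. Each of the eight cases gives an equation linear in `w`;
either it has no solution, or its solution contradicts the case or a hypothesis on `a`.
-/

section Squares

variable {F : Type*} [Field F]

lemma ne_zero_of_not_isSquare {x : F} (hx : ¬ IsSquare x) : x ≠ 0 := by
  rintro rfl
  exact hx IsSquare.zero

lemma isSquare_of_isSquare_mul_right {x y : F} (hy : IsSquare y) (hy0 : y ≠ 0)
    (hxy : IsSquare (x * y)) : IsSquare x := by
  simpa only [mul_div_cancel_right₀ x hy0] using hxy.div hy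

lemma ne_zero_of_not_isSquare_sub_one (hneg : IsSquare (-1 : F)) {a : F}
    (ha : ¬ IsSquare (a - 1)) : a ≠ 0 := by
  rintro rfl
  exact ha (by rwa [zero_sub])

lemma add_one_ne_zero_of_not_isSquare_sq_add_add_one {a : F}
    (ha : ¬ IsSquare (a ^ 2 + a + 1)) : a + 1 ≠ 0 := by
  intro h
  have hone : a ^ 2 + a + 1 = 1 := by linear_combination a * h
  exact ha (by rw [hone]; exact IsSquare.one)

lemma isSquare_mul_of_not_isSquare [Finite F] {x y : F} (hx : ¬ IsSquare x) (hy : ¬ IsSquare y) :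
    IsSquare (x * y) := by
  have := Fintype.ofFinite F
  rw [← quadraticChar_one_iff_isSquare
      (mul_ne_zero (ne_zero_of_not_isSquare hx) (ne_zero_of_not_isSquare hy)),
    map_mul, quadraticChar_neg_one_iff_not_isSquare.2 hx,
    quadraticChar_neg_one_iff_not_isSquare.2 hy, neg_one_mul, neg_neg]

end Squares

/-- The binary operation `L_{a,b}` on a field, given by the affine combination of `x` and `y` with
parameter `a` or `b` according to whether `y - x` is a square (`0` counts as one) or not. -/
noncomputable def quadraticOp {F : Type*} [Field F] (a b x y : F) : F :=
  if IsSquare (y - x) then x + a * (y - x) else x + b * (y - x)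

section QuadraticOp

variable {F : Type*} [Field F] {a b x y η w : F}

-- The definition uses the classical instance, whereas for finite `F` a computable one is inferred.
lemma quadraticOp_eq_ite (a b x y : F) [Decidable (IsSquare (y - x))] :
    quadraticOp a b x y = if IsSquare (y - x) then x + a * (y - x) else x + b * (y - x) := by
  rw [quadraticOp]
  congr

lemma quadraticOp_of_isSquare (h : IsSquare (y - x)) :
    quadraticOp a b x y = x + a * (y - x) :=
  if_pos h

lemma quadraticOp_of_not_isSquare (h : ¬ IsSquare (y - x)) :
    quadraticOp a b x y = x + b * (y - x) :=
  if_neg h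

lemma quadraticOp_zero_left_of_isSquare (h : IsSquare y) : quadraticOp a b 0 y = a * y := by
  rw [quadraticOp_of_isSquare (by rwa [sub_zero]), sub_zero, zero_add]

lemma quadraticOp_zero_left_of_not_isSquare (h : ¬ IsSquare y) :
    quadraticOp a b 0 y = b * y := by
  rw [quadraticOp_of_not_isSquare (by rwa [sub_zero]), sub_zero, zero_add]

lemma quadraticOp_mul_mul_of_not_isSquare
    (hmul : ∀ x y : F, ¬ IsSquare x → ¬ IsSquare y → IsSquare (x * y)) (hη : ¬ IsSquare η) :
    quadraticOp a b (η * x) (η * y) = η * quadraticOp b a x y := by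
  rcases eq_or_ne y x with rfl | hyx
  · simp [quadraticOp]
  by_cases h : IsSquare (y - x)
  · have hη' : ¬ IsSquare (η * y - η * x) := fun hsq =>
      hη (isSquare_of_isSquare_mul_right h (sub_ne_zero.2 hyx) (by rwa [mul_sub]))
    rw [quadraticOp_of_isSquare h, quadraticOp_of_not_isSquare hη']
    ring
  · have hη' : IsSquare (η * y - η * x) := by
      rw [← mul_sub]
      exact hmul η (y - x) hη h
    rw [quadraticOp_of_not_isSquare h, quadraticOp_of_isSquare hη']
    ring

lemma quadraticOp_assoc_zero_mul_iff
    (hmul : ∀ x y : F, ¬ IsSquare x → ¬ IsSquare y → IsSquare (x * y)) (hη : ¬ IsSquare η) :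
    quadraticOp a b (quadraticOp a b 0 η) (η * w) = quadraticOp a b 0 (quadraticOp a b η (η * w)) ↔
      quadraticOp b a (quadraticOp b a 0 1) w = quadraticOp b a 0 (quadraticOp b a 1 w) := by
  have scale (x y : F) : quadraticOp a b (η * x) (η * y) = η * quadraticOp b a x y :=
    quadraticOp_mul_mul_of_not_isSquare hmul hη
  have h₁ : quadraticOp a b 0 η = η * quadraticOp b a 0 1 := by simpa using scale 0 1
  have h₂ : quadraticOp a b η (η * w) = η * quadraticOp b a 1 w := by simpa using scale 1 w
  have h₃ (y : F) : quadraticOp a b 0 (η * y) = η * quadraticOp b a 0 y := by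
    simpa using scale 0 y
  rw [h₁, h₂, h₃, scale, mul_right_inj' (ne_zero_of_not_isSquare hη)]

lemma quadraticOp_sq_not_assoc_of_not_isSquare_sub_one (hneg : IsSquare (-1 : F)) (ha0 : a ≠ 0)
    (hsub0 : a - 1 ≠ 0) (hadd0 : a + 1 ≠ 0) (ha : IsSquare a) (hadd : IsSquare (a + 1))
    (hquad0 : a ^ 2 + a - 1 ≠ 0) (hw : ¬ IsSquare (w - 1)) :
    quadraticOp (a ^ 2) a (a ^ 2) w ≠ quadraticOp (a ^ 2) a 0 (1 + a * (w - 1)) := by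
  intro h
  by_cases hout : IsSquare (w - a ^ 2) <;> by_cases hin : IsSquare (1 + a * (w - 1))
  · rw [quadraticOp_of_isSquare hout, quadraticOp_zero_left_of_isSquare hin] at h
    have hw_eq : w - 1 = -1 * (a + 1) := by
      apply mul_left_cancel₀ (mul_ne_zero (pow_ne_zero 2 ha0) hsub0)
      linear_combination -h
    exact hw (hw_eq ▸ hneg.mul hadd)
  · rw [quadraticOp_of_isSquare hout, quadraticOp_zero_left_of_not_isSquare hin] at h
    have hzero : a * (a - 1) * (a ^ 2 + a - 1) = 0 := by linear_combination -h
    exact mul_ne_zero (mul_ne_zero ha0 hsub0) hquad0 hzero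
  · rw [quadraticOp_of_not_isSquare hout, quadraticOp_zero_left_of_isSquare hin] at h
    have hw_eq : w - a ^ 2 = -1 * a ^ 2 := by
      apply mul_left_cancel₀ (mul_ne_zero (mul_ne_zero ha0 hsub0) hadd0)
      linear_combination -h
    exact hout (hw_eq ▸ hneg.mul (IsSquare.sq a))
  · rw [quadraticOp_of_not_isSquare hout, quadraticOp_zero_left_of_not_isSquare hin] at h
    have hw_eq : w - 1 = -1 * a := by
      apply mul_left_cancel₀ (mul_ne_zero ha0 hsub0)
      linear_combination -h
    exact hw (hw_eq ▸ hneg.mul ha)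

lemma quadraticOp_sq_not_assoc_of_isSquare_sub_one (hneg : IsSquare (-1 : F)) (ha : IsSquare a)
    (hadd : IsSquare (a + 1)) (hcubic : IsSquare (a ^ 3 - a - 1)) (hsub : ¬ IsSquare (a - 1))
    (hquad : ¬ IsSquare (a ^ 2 + a + 1)) (hquad' : ¬ IsSquare (a ^ 2 + a - 1))
    (hw : IsSquare (w - 1)) :
    quadraticOp (a ^ 2) a (a ^ 2) w ≠ quadraticOp (a ^ 2) a 0 (1 + a ^ 2 * (w - 1)) := by
  have ha0 : a ≠ 0 := ne_zero_of_not_isSquare_sub_one hneg hsub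
  have hsub0 : a - 1 ≠ 0 := ne_zero_of_not_isSquare hsub
  have hadd0 : a + 1 ≠ 0 := add_one_ne_zero_of_not_isSquare_sq_add_add_one hquad
  intro h
  by_cases hout : IsSquare (w - a ^ 2) <;> by_cases hin : IsSquare (1 + a ^ 2 * (w - 1))
  · rw [quadraticOp_of_isSquare hout, quadraticOp_zero_left_of_isSquare hin] at h
    have hw_eq : w = 0 := by
      apply mul_left_cancel₀ (mul_ne_zero (mul_ne_zero (pow_ne_zero 2 ha0) hsub0) hadd0)
      linear_combination -h
    have hin_eq : 1 + a ^ 2 * (w - 1) = (a - 1) * (-1 * (a + 1)) := by rw [hw_eq]; ring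
    exact hsub (isSquare_of_isSquare_mul_right (hneg.mul hadd) (mul_ne_zero (by simp) hadd0)
      (hin_eq ▸ hin))
  · rw [quadraticOp_of_isSquare hout, quadraticOp_zero_left_of_not_isSquare hin] at h
    have hquad_eq : a ^ 2 + a - 1 = -1 * a * (w - 1) := by
      apply mul_left_cancel₀ (mul_ne_zero ha0 hsub0)
      linear_combination -h
    exact hquad' (hquad_eq ▸ (hneg.mul ha).mul hw)
  · rw [quadraticOp_of_not_isSquare hout, quadraticOp_zero_left_of_isSquare hin] at h
    have hprod : (a ^ 2 + a + 1) * (w - 1) = -1 * (a + 1) := by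
      apply mul_left_cancel₀ (mul_ne_zero ha0 hsub0)
      linear_combination -h
    have hw0 : w - 1 ≠ 0 :=
      right_ne_zero_of_mul (hprod ▸ mul_ne_zero (by simp) hadd0)
    exact hquad (isSquare_of_isSquare_mul_right hw hw0 (hprod ▸ hneg.mul hadd))
  · rw [quadraticOp_of_not_isSquare hout, quadraticOp_zero_left_of_not_isSquare hin] at h
    have hw_eq : (a + 1) * w = 1 := by
      apply mul_left_cancel₀ (mul_ne_zero ha0 hsub0)
      linear_combination -h
    have hprod : (1 + a ^ 2 * (w - 1)) * (a + 1) = -1 * (a ^ 3 - a - 1) := by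
      linear_combination a ^ 2 * hw_eq
    exact hin (isSquare_of_isSquare_mul_right hadd hadd0 (hprod ▸ hneg.mul hcubic))

theorem quadraticOp_sq_zero_one_not_assoc (hneg : IsSquare (-1 : F)) (ha : IsSquare a)
    (hadd : IsSquare (a + 1)) (hcubic : IsSquare (a ^ 3 - a - 1)) (hsub : ¬ IsSquare (a - 1))
    (hquad : ¬ IsSquare (a ^ 2 + a + 1)) (hquad' : ¬ IsSquare (a ^ 2 + a - 1)) (w : F) :
    quadraticOp (a ^ 2) a (quadraticOp (a ^ 2) a 0 1) w ≠
      quadraticOp (a ^ 2) a 0 (quadraticOp (a ^ 2) a 1 w) := by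
  rw [quadraticOp_zero_left_of_isSquare IsSquare.one, mul_one]
  by_cases hw : IsSquare (w - 1)
  · rw [quadraticOp_of_isSquare hw]
    exact quadraticOp_sq_not_assoc_of_isSquare_sub_one hneg ha hadd hcubic hsub hquad hquad' hw
  · rw [quadraticOp_of_not_isSquare hw]
    exact quadraticOp_sq_not_assoc_of_not_isSquare_sub_one hneg
      (ne_zero_of_not_isSquare_sub_one hneg hsub) (ne_zero_of_not_isSquare hsub)
      (add_one_ne_zero_of_not_isSquare_sq_add_add_one hquad) ha hadd
      (ne_zero_of_not_isSquare hquad') hw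

theorem Laa2_no_assoc_0ηz_q1mod4_general
    (hmul : ∀ x y : F, ¬ IsSquare x → ¬ IsSquare y → IsSquare (x * y))
    (hneg : IsSquare (-1 : F)) (ha : IsSquare a) (hadd : IsSquare (a + 1))
    (hcubic : IsSquare (a ^ 3 - a - 1)) (hsub : ¬ IsSquare (a - 1))
    (hquad : ¬ IsSquare (a ^ 2 + a + 1)) (hquad' : ¬ IsSquare (a ^ 2 + a - 1))
    (hη : ¬ IsSquare η) (z : F) :
    quadraticOp a (a ^ 2) (quadraticOp a (a ^ 2) 0 η) z ≠
      quadraticOp a (a ^ 2) 0 (quadraticOp a (a ^ 2) η z) := by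
  obtain ⟨w, rfl⟩ : ∃ w, z = η * w :=
    ⟨z / η, (mul_div_cancel₀ z (ne_zero_of_not_isSquare hη)).symm⟩
  rw [Ne, quadraticOp_assoc_zero_mul_iff hmul hη]
  exact quadraticOp_sq_zero_one_not_assoc hneg ha hadd hcubic hsub hquad hquad' w

end QuadraticOp

/-- Case `q ≡ 1 (mod 4)`: no triple `(0, η, z)` with `η` a non-square is associative for `L_{a,a²}`. -/
theorem Laa2_no_assoc_0ηz_q1mod4 (F : Type*) [Field F] [Fintype F]
    (q : ℕ) (hq : Fintype.card F = q) (h4 : q % 4 = 1)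
    (a : F) (ha1 : a ≠ -1) (ha2 : a ≠ 0) (ha3 : a ≠ 1)
    (hs1 : IsSquare a) (hs2 : IsSquare (a + 1)) (hs3 : IsSquare (a ^ 3 - a - 1))
    (hn1 : ¬ IsSquare (a - 1)) (hn2 : ¬ IsSquare (a ^ 2 + 1))
    (hn3 : ¬ IsSquare (a ^ 2 - a - 1)) (hn4 : ¬ IsSquare (a ^ 2 + a + 1))
    (hn5 : ¬ IsSquare (a ^ 2 + a - 1))
    (L : F → F → F)
    (hL : ∀ x y : F,
      L x y = if IsSquare (y - x) then x + a * (y - x) else x + a ^ 2 * (y - x)) :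
    ∀ η : F, ¬ IsSquare η → ∀ z : F, L (L 0 η) z ≠ L 0 (L η z) := by
  obtain rfl : L = quadraticOp a (a ^ 2) :=
    funext₂ fun x y => (hL x y).trans (quadraticOp_eq_ite a (a ^ 2) x y).symm
  exact fun η hη z => Laa2_no_assoc_0ηz_q1mod4_general (fun _ _ => isSquare_mul_of_not_isSquare)
    (FiniteField.isSquare_neg_one_iff.2 (by omega)) hs1 hs2 hs3 hn1 hn4 hn5 hη z
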